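/- arXiv:2201.01031 — 2 statements merged into one kernel-verified Lean document; each statement's English description precedes it below -/
import Mathlib

section
/- Let F be a finite field of characteristic different from 2, let s,ℓ,k ≥ 1, let α ∈ {1,−1} ⊆ F and β = γ = −1 (so r = r' = 2). Assume ω ∈ F has multiplicative order 2k with ω^k = −1 and θ ∈ F has multiplicative order 2ℓ with θ^ℓ = −1. Let R := F[x,y,z]/⟨x^s−α, y^ℓ+1, z^k+1⟩ with quotient map π, let ζ_t(z) := ∏_{t'≠t}(z − ω^{1+2t'})/(ω^{1+2t} − ω^{1+2t'}) for 0 ≤ t ≤ k−1 and η_j(y) := ∏_{j'≠j}(y − θ^{1+2j'})/(θ^{1+2j} − θ^{1+2j'}) for 0 ≤ j ≤ ℓ−1, let V := (Fin s × Fin ℓ × Fin k) → F with dot product ⟨c,d⟩ := Σ c(i,j,t)d(i,j,t), and let φ : V → R be the F-linear isomorphism φ(c) := Σ c(i,j,t)·π(x^i y^j z^t). For each t, j let p_j^{(t)} ∈ F[x] be a monic divisor of x^s − α of degree a_{t,j}, let q_j^{(t)} := (x^s − α)/p_j^{(t)}, and let C be the ideal of R generated by the elements π(ζ_t(z)·η_j(y)·p_j^{(t)}(x)).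 Then φ^{−1}(C) equals its own orthogonal complement in V if and only if both: (i) sℓk = 2·Σ_{t,j} a_{t,j}; and (ii) for all t, j there exist polynomials m, m' ∈ F[x] such that q_j^{(t)*} ≡ m·p_{ℓ−1−j}^{(k−1−t)} (mod x^s−α) and p_j^{(t)} ≡ m'·q_{ℓ−1−j}^{(k−1−t)*} (mod x^s−α), where * denotes the reciprocal polynomial. -/
set_option synthInstance.maxHeartbeats 1000000

open Polynomial

/-- The Lagrange interpolation polynomial `ζ_t` at the `k` points `ω^{1+t'r}`,
`0 ≤ t' ≤ k−1`. -/
noncomputable def zetaPoly {F : Type*} [Field F] (ω : F) (r k t : ℕ) : Polynomial F :=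
  ∏ t' ∈ (Finset.range k).erase t,
    (C ((ω ^ (1 + t * r) - ω ^ (1 + t' * r))⁻¹) * (X - C (ω ^ (1 + t' * r))))

/-- The ideal `⟨x^s − α, y^ℓ − β, z^k − γ⟩` of `F[x,y,z]`. -/
noncomputable def ccIdeal (F : Type*) [Field F] (s l k : ℕ) (α β γ : F) :
    Ideal (MvPolynomial (Fin 3) F) :=
  Ideal.span { MvPolynomial.X 0 ^ s - MvPolynomial.C α,
               MvPolynomial.X 1 ^ l - MvPolynomial.C β,
               MvPolynomial.X 2 ^ k - MvPolynomial.C γ }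

/-- A univariate polynomial viewed in `F[x,y,z]` as a polynomial in `x`. -/
noncomputable def inX {F : Type*} [Field F] (p : Polynomial F) : MvPolynomial (Fin 3) F :=
  Polynomial.aeval (MvPolynomial.X 0) p

/-- A univariate polynomial viewed in `F[x,y,z]` as a polynomial in `y`. -/
noncomputable def inY {F : Type*} [Field F] (p : Polynomial F) : MvPolynomial (Fin 3) F :=
  Polynomial.aeval (MvPolynomial.X 1) p

/-- A univariate polynomial viewed in `F[x,y,z]` as a polynomial in `z`. -/
noncomputable def inZ {F : Type*} [Field F] (p : Polynomial F) : MvPolynomial (Fin 3) F :=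
  Polynomial.aeval (MvPolynomial.X 2) p

/-- The `λ`-twisted shift in the `x`-direction on `V = (Fin s × Fin ℓ × Fin k) → F`:
`(T_λ^x c)(i,j,t) = λ·c(s−1,j,t)` if `i = 0`, and `c(i−1,j,t)` otherwise. -/
def shiftX {F : Type*} [Field F] {s l k : ℕ} [NeZero s] (lam : F)
    (c : Fin s × Fin l × Fin k → F) : Fin s × Fin l × Fin k → F :=
  fun w => (if w.1 = 0 then lam else 1) * c (w.1 - 1, w.2.1, w.2.2)

/-- The `λ`-twisted shift in the `y`-direction. -/
def shiftY {F : Type*} [Field F] {s l k : ℕ} [NeZero l] (lam : F)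
    (c : Fin s × Fin l × Fin k → F) : Fin s × Fin l × Fin k → F :=
  fun w => (if w.2.1 = 0 then lam else 1) * c (w.1, w.2.1 - 1, w.2.2)

/-- The `λ`-twisted shift in the `z`-direction. -/
def shiftZ {F : Type*} [Field F] {s l k : ℕ} [NeZero k] (lam : F)
    (c : Fin s × Fin l × Fin k → F) : Fin s × Fin l × Fin k → F :=
  fun w => (if w.2.2 = 0 then lam else 1) * c (w.1, w.2.1, w.2.2 - 1)

/-- The dot product on `V = (Fin s × Fin ℓ × Fin k) → F`. -/
def dotV {F : Type*} [Field F] {s l k : ℕ}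
    (c d : Fin s × Fin l × Fin k → F) : F :=
  ∑ w : Fin s × Fin l × Fin k, c w * d w

/-- Reversal of coordinates: `(ρ b)(i,j,t) = b(s−1−i, ℓ−1−j, k−1−t)`. -/
def revV {F : Type*} [Field F] {s l k : ℕ}
    (b : Fin s × Fin l × Fin k → F) : Fin s × Fin l × Fin k → F :=
  fun w => b (w.1.rev, w.2.1.rev, w.2.2.rev)

/-- The `F`-linear isomorphism `V → R` sending a coefficient vector `c` to
`Σ c(i,j,t)·π(x^i y^j z^t)` in `R = F[x,y,z]/⟨x^s−α, y^ℓ−β, z^k−γ⟩`. -/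
noncomputable def phiV {F : Type*} [Field F] {s l k : ℕ} (α β γ : F)
    (c : Fin s × Fin l × Fin k → F) :
    MvPolynomial (Fin 3) F ⧸ ccIdeal F s l k α β γ :=
  ∑ w : Fin s × Fin l × Fin k,
    c w • Ideal.Quotient.mk (ccIdeal F s l k α β γ)
      (MvPolynomial.X 0 ^ (w.1 : ℕ) * MvPolynomial.X 1 ^ (w.2.1 : ℕ) *
        MvPolynomial.X 2 ^ (w.2.2 : ℕ))


/-!
The polynomials `ζ_t(z) η_j(y)` are orthogonal idempotents of `R = F[x,y,z] / (x^s - α, y^l + 1,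
z^k + 1)`, and substituting `y = θ ^ (1 + 2 j)`, `z = ω ^ (1 + 2 t)` identifies `R` with a product
of `l k` copies of `F[x] / (x^s - α)`. On coefficient arrays this substitution is a finite Fourier
transform, `spec`, and the code `C` becomes the direct sum of the univariate codes generated by the
`p t j` (`phiV_mem_iff`).

Complementing `j` and `t` inverts the nodes, since `θ ^ (2 l) = ω ^ (2 k) = 1`. The orthogonality
relations for the nodes therefore give Parseval's identity
`∑ spec v (i, j, t) * spec b (i, rev j, rev t) = l k ⟨v, b⟩` (`sum_spec_mul_spec_rev`), where
`l k ≠ 0` in `F`. It shows that `spec` is bijective, and that the dual of `C` is the direct sum of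
the univariate duals with the indices complemented.

The univariate dual of the code generated by `p`, where `p q = X^s - α`, is generated by the
reciprocal of `q` (`forall_sum_eq_zero_iff`): the dot product of `c` and `d` is the coefficient of
`X ^ (s - 1)` in `c*(X) d(X)`, with `c*` the reversal of `c`, and this coefficient is a
nondegenerate functional on `F[X] / (X^s - α)`. Hence `C` is self-dual iff `p t j` and the
reciprocal of `q (rev t) (rev j)` divide each other for all `t, j`. Here `α ^ 2 = 1` ensures that
the reciprocals again divide `X^s - α`, so that congruences modulo `X^s - α` are divisibilities.
Comparing degrees then gives `a t j + a (rev t) (rev j) = s`, so the numerical condition is a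
consequence of the other one.
-/

/-! ### Roots of `y ^ l + 1` and their Lagrange polynomials -/

section Nodes

variable {F : Type*} [Field F] {θ : F} {l : ℕ}

lemma node_injOn (hθ : orderOf θ = 2 * l) :
    Set.InjOn (fun i : ℕ => θ ^ (1 + i * 2)) (Finset.range l : Set ℕ) := by
  intro i hi j hj hij
  simp only [Finset.coe_range, Set.mem_Iio] at hi hj
  have := pow_injOn_Iio_orderOf (x := θ) (x₁ := 1 + i * 2) (x₂ := 1 + j * 2)
    (by simp only [Set.mem_Iio]; omega) (by simp only [Set.mem_Iio]; omega) hij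
  omega

lemma ne_zero_of_orderOf [NeZero l] (hθ : orderOf θ = 2 * l) : θ ≠ 0 := by
  rintro rfl
  have := NeZero.pos l
  rw [orderOf_zero] at hθ
  omega

lemma natCast_ne_zero_of_orderOf [NeZero l] (hθ : orderOf θ = 2 * l) : (l : F) ≠ 0 := by
  have h := (hθ ▸ IsPrimitiveRoot.orderOf θ : IsPrimitiveRoot θ (2 * l)).neZero'.out
  push_cast at h
  exact right_ne_zero_of_mul h

lemma prod_nodes [NeZero l] (hθ : orderOf θ = 2 * l) (hθl : θ ^ l = -1) :
    ∏ i ∈ Finset.range l, (X - C (θ ^ (1 + i * 2))) = (X ^ l + 1 : F[X]) := by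
  have hp : IsPrimitiveRoot (θ ^ 2) l :=
    (hθ ▸ IsPrimitiveRoot.orderOf θ : IsPrimitiveRoot θ (2 * l)).pow
      (by have := NeZero.pos l; omega) rfl
  have h := X_pow_sub_C_eq_prod hp (NeZero.pos l) hθl
  rw [C_neg, C_1, sub_neg_eq_add] at h
  rw [h]
  refine Finset.prod_congr rfl fun i _ => ?_
  congr 2
  ring

lemma zetaPoly_eq_basis (t : ℕ) :
    zetaPoly θ 2 l t = Lagrange.basis (Finset.range l) (fun i => θ ^ (1 + i * 2)) t := rfl

lemma sum_zetaPoly [NeZero l] (hθ : orderOf θ = 2 * l) :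
    ∑ t : Fin l, zetaPoly θ 2 l t = 1 := by
  simp only [zetaPoly_eq_basis]
  rw [Fin.sum_univ_eq_sum_range
    (fun t => Lagrange.basis (Finset.range l) (fun i => θ ^ (1 + i * 2)) t)]
  exact Lagrange.sum_basis (node_injOn hθ) ⟨0, by simpa using NeZero.pos l⟩

/-- The Lagrange polynomial at a node is an eigenvector of multiplication by `Z` in any algebra
where `Z ^ l = -1`, the eigenvalue being the node. -/
lemma mul_aeval_zetaPoly [NeZero l] (hθ : orderOf θ = 2 * l) (hθl : θ ^ l = -1)
    {S : Type*} [CommRing S] [Algebra F S] (Z : S) (hZ : Z ^ l = -1) (t : Fin l) :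
    aeval Z (zetaPoly θ 2 l t) * Z =
      aeval Z (zetaPoly θ 2 l t) * algebraMap F S (θ ^ (1 + (t : ℕ) * 2)) := by
  have h0 : aeval Z (zetaPoly θ 2 l t * (X - C (θ ^ (1 + (t : ℕ) * 2)))) = 0 := by
    rw [zetaPoly, Finset.prod_mul_distrib, mul_assoc, Finset.prod_erase_mul _ _ (by simp),
      prod_nodes hθ hθl]
    simp [hZ]
  rw [map_mul, map_sub, aeval_X, aeval_C, mul_sub, sub_eq_zero] at h0
  exact h0

lemma mul_aeval_zetaPoly_pow [NeZero l] (hθ : orderOf θ = 2 * l) (hθl : θ ^ l = -1)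
    {S : Type*} [CommRing S] [Algebra F S] (Z : S) (hZ : Z ^ l = -1) (t : Fin l) (n : ℕ) :
    aeval Z (zetaPoly θ 2 l t) * Z ^ n =
      aeval Z (zetaPoly θ 2 l t) * algebraMap F S ((θ ^ (1 + (t : ℕ) * 2)) ^ n) := by
  induction n with
  | zero => simp
  | succ n ih =>
    rw [pow_succ, ← mul_assoc, ih, mul_right_comm, mul_aeval_zetaPoly hθ hθl Z hZ, pow_succ,
      map_mul]
    ring

lemma node_rev [NeZero l] (hθ : orderOf θ = 2 * l) (j : Fin l) :
    θ ^ (1 + (j.rev : ℕ) * 2) = (θ ^ (1 + (j : ℕ) * 2))⁻¹ := by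
  have h := ne_zero_of_orderOf hθ
  rw [← mul_eq_one_iff_eq_inv₀ (pow_ne_zero _ h), ← pow_add, Fin.val_rev]
  have : 1 + (l - (j + 1)) * 2 + (1 + (j : ℕ) * 2) = orderOf θ := by have := j.2; omega
  rw [this, pow_orderOf_eq_one]

/-- Orthogonality of the odd characters `y ↦ θ ^ ((1 + 2 j) y)`. -/
lemma node_orthogonal [NeZero l] (hθ : orderOf θ = 2 * l) (y y' : Fin l) :
    ∑ j : Fin l, (θ ^ (1 + (j : ℕ) * 2)) ^ (y : ℕ) * (θ ^ (1 + (j.rev : ℕ) * 2)) ^ (y' : ℕ) =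
      if y = y' then (l : F) else 0 := by
  have h := ne_zero_of_orderOf hθ
  simp only [node_rev hθ]
  split_ifs with hy
  · subst hy
    have : ∀ j : Fin l, (θ ^ (1 + (j : ℕ) * 2)) ^ (y : ℕ) * (θ ^ (1 + (j : ℕ) * 2))⁻¹ ^ (y : ℕ) = 1 :=
      fun j => by rw [← mul_pow, mul_inv_cancel₀ (pow_ne_zero _ h), one_pow]
    rw [Finset.sum_congr rfl fun j _ => this j]
    simp
  -- the summand is `u * (u ^ 2) ^ j`, a geometric progression whose ratio is not `1`
  set u : F := θ ^ (y : ℕ) / θ ^ (y' : ℕ) with hu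
  have hterm : ∀ j : Fin l, (θ ^ (1 + (j : ℕ) * 2)) ^ (y : ℕ) *
      (θ ^ (1 + (j : ℕ) * 2))⁻¹ ^ (y' : ℕ) = u * (u ^ 2) ^ (j : ℕ) := by
    intro j
    rw [← pow_mul u, ← pow_succ', hu, div_pow, inv_pow, div_eq_mul_inv, ← pow_mul, ← pow_mul,
      ← pow_mul, ← pow_mul]
    congr 2 <;> ring_nf
  have hu1 : u ^ 2 ≠ 1 := by
    intro hu2
    rw [hu, div_pow, div_eq_one_iff_eq (pow_ne_zero _ (pow_ne_zero _ h)), ← pow_mul,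
      ← pow_mul] at hu2
    have := pow_injOn_Iio_orderOf (x := θ) (x₁ := y * 2) (x₂ := y' * 2)
      (by simp only [Set.mem_Iio]; omega) (by simp only [Set.mem_Iio]; omega) hu2
    exact hy (Fin.ext (by omega))
  have hul : (u ^ 2) ^ l = 1 := by
    rw [← pow_mul, hu, div_pow, ← pow_mul, ← pow_mul, mul_comm, pow_mul, ← hθ,
      pow_orderOf_eq_one, mul_comm (y' : ℕ), pow_mul, pow_orderOf_eq_one]
    simp
  have hg := geom_sum_mul (u ^ 2) l
  rw [hul, sub_self, mul_eq_zero, sub_eq_zero] at hg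
  simp only [hterm]
  rw [← Finset.mul_sum, Fin.sum_univ_eq_sum_range (fun j => (u ^ 2) ^ j), hg.resolve_right hu1,
    mul_zero]

end Nodes

/-! ### Univariate constacyclic codes and their duals -/

section Univariate

variable {F : Type*} [Field F]

/-- The polynomial with a given coefficient vector. -/
noncomputable def vecPoly {s : ℕ} (c : Fin s → F) : F[X] := ∑ i : Fin s, C (c i) * X ^ (i : ℕ)

lemma coeff_vecPoly {s : ℕ} (c : Fin s → F) (i : Fin s) : (vecPoly c).coeff i = c i := by
  simp [vecPoly, coeff_X_pow, Fin.val_inj]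

lemma natDegree_vecPoly_le {n : ℕ} (c : Fin (n + 1) → F) : (vecPoly c).natDegree ≤ n :=
  natDegree_sum_le_of_forall_le _ _ fun i _ =>
    (natDegree_C_mul_X_pow_le _ _).trans (Nat.lt_succ_iff.1 i.2)

lemma vecPoly_coeff {n : ℕ} {f : F[X]} (hf : f.natDegree ≤ n) :
    vecPoly (fun i : Fin (n + 1) => f.coeff i) = f := by
  rw [vecPoly, Fin.sum_univ_eq_sum_range (fun i => C (f.coeff i) * X ^ i)]
  exact (f.as_sum_range_C_mul_X_pow' (Nat.lt_succ_of_le hf)).symm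

lemma coeff_reflect_mul_vecPoly {n : ℕ} (c d : Fin (n + 1) → F) :
    ((reflect n (vecPoly c)) * vecPoly d).coeff n = ∑ i, c i * d i := by
  rw [mul_comm, coeff_mul, Finset.Nat.sum_antidiagonal_eq_sum_range_succ
    (fun i j => (vecPoly d).coeff i * (reflect n (vecPoly c)).coeff j), Nat.succ_eq_add_one,
    Finset.sum_range]
  refine Finset.sum_congr rfl fun i _ => ?_
  have hi : (i : ℕ) ≤ n := Nat.lt_succ_iff.1 i.2
  rw [coeff_reflect, revAt_le (Nat.sub_le _ _), Nat.sub_sub_self hi, coeff_vecPoly, coeff_vecPoly,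
    mul_comm]

lemma reverse_dvd_reflect {q h : F[X]} {n : ℕ} (hh : h.natDegree ≤ n) (hq : q ∣ h) :
    q.reverse ∣ reflect n h := by
  obtain ⟨m, rfl⟩ := hq
  rcases eq_or_ne (q * m) 0 with h0 | h0
  · simp [h0]
  have hdeg := natDegree_mul (left_ne_zero_of_mul h0) (right_ne_zero_of_mul h0)
  obtain ⟨e, rfl⟩ := Nat.exists_eq_add_of_le (hdeg ▸ hh : q.natDegree + m.natDegree ≤ n)
  rw [add_assoc, reflect_mul q m le_rfl (Nat.le_add_right _ _)]
  exact dvd_mul_right _ _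

lemma natDegree_reflect_le_of_le {f : F[X]} {n : ℕ} (hf : f.natDegree ≤ n) :
    (reflect n f).natDegree ≤ n := by
  rw [natDegree_le_iff_coeff_eq_zero]
  intro i hi
  rw [coeff_reflect, revAt_eq_self_of_lt hi]
  exact coeff_eq_zero_of_natDegree_lt (hf.trans_lt hi)

lemma reverse_reverse_of_coeff_zero {q : F[X]} (hq : q.coeff 0 ≠ 0) : q.reverse.reverse = q := by
  have : q.reverse.natDegree = q.natDegree := by
    rw [reverse_natDegree, natTrailingDegree_eq_zero.2 (Or.inr hq), Nat.sub_zero]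
  rw [reverse, this]
  exact reflect_reflect

lemma dvd_reflect_iff {q f : F[X]} {n : ℕ} (hf : f.natDegree ≤ n) (hq : q.coeff 0 ≠ 0) :
    q ∣ reflect n f ↔ q.reverse ∣ f := by
  constructor
  · intro h
    simpa only [reflect_reflect] using reverse_dvd_reflect (natDegree_reflect_le_of_le hf) h
  · intro h
    simpa only [reverse_reverse_of_coeff_zero hq] using reverse_dvd_reflect hf h

/-- The top coefficient of the residue is a nondegenerate functional on `F[X] / (M)`. -/
lemma dvd_of_forall_coeff_modByMonic {M : F[X]} (hM : M.Monic) {n : ℕ} (hdeg : M.natDegree = n + 1)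
    {f : F[X]} (h : ∀ m : F[X], ((f * m) %ₘ M).coeff n = 0) : M ∣ f := by
  rw [← modByMonic_eq_zero_iff_dvd hM]
  by_contra hr
  set r := f %ₘ M with hrdef
  have hM1 : M ≠ 1 := by rintro rfl; simp at hdeg
  have hrdeg : r.natDegree ≤ n := by
    have := natDegree_modByMonic_lt f hM hM1
    rw [← hrdef] at this
    omega
  have hdegree : (r * X ^ (n - r.natDegree)).degree < M.degree := by
    rw [degree_mul, degree_X_pow, degree_eq_natDegree hr, degree_eq_natDegree hM.ne_zero, hdeg]
    exact_mod_cast (by omega : r.natDegree + (n - r.natDegree) < n + 1)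
  have hmod : (f * X ^ (n - r.natDegree)) %ₘ M = r * X ^ (n - r.natDegree) := by
    rw [← (modByMonic_eq_self_iff hM).2 hdegree, ← sub_eq_zero, ← sub_modByMonic,
      modByMonic_eq_zero_iff_dvd hM, ← sub_mul]
    refine Dvd.dvd.mul_right ?_ _
    rw [← neg_sub, dvd_neg]
    exact dvd_modByMonic_sub f M
  have h1 := h (X ^ (n - r.natDegree))
  rw [hmod] at h1
  have h2 := coeff_mul_X_pow r (n - r.natDegree) r.natDegree
  rw [Nat.add_sub_cancel' hrdeg, h1] at h2
  exact hr (leadingCoeff_eq_zero.1 h2.symm)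

lemma coeff_modByMonic_X_pow_sub_C {n : ℕ} (α : F) {u : F[X]} (hu : u.natDegree ≤ n + n) :
    (u %ₘ (X ^ (n + 1) - C α)).coeff n = u.coeff n := by
  have hM : (X ^ (n + 1) - C α : F[X]).Monic := monic_X_pow_sub_C α n.succ_ne_zero
  have hMdeg : (X ^ (n + 1) - C α : F[X]).natDegree = n + 1 := natDegree_X_pow_sub_C
  have hg : (u /ₘ (X ^ (n + 1) - C α)).coeff n = 0 := by
    have h := natDegree_divByMonic u hM
    rcases Nat.eq_zero_or_pos n with rfl | hn
    · rw [(divByMonic_eq_zero_iff hM).2, coeff_zero]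
      exact degree_lt_degree (by omega)
    · exact coeff_eq_zero_of_natDegree_lt (by omega)
  conv_rhs => rw [← modByMonic_add_div u (X ^ (n + 1) - C α)]
  rw [coeff_add, sub_mul, coeff_sub, coeff_C_mul, hg, coeff_X_pow_mul',
    if_neg (by omega)]
  simp

/-- The dual of the constacyclic code generated by a divisor `p` of `X ^ s - α` is generated by the
reciprocal of the check polynomial. -/
lemma forall_sum_eq_zero_iff {s : ℕ} [NeZero s] {α : F} (hα : α ≠ 0) {p q : F[X]}
    (hpq : p * q = X ^ s - C α) (c : Fin s → F) :
    (∀ d : Fin s → F, p ∣ vecPoly d → ∑ i, c i * d i = 0) ↔ q.reverse ∣ vecPoly c := by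
  obtain ⟨n, rfl⟩ : ∃ n, s = n + 1 := Nat.exists_eq_succ_of_ne_zero (NeZero.ne s)
  have hM : (X ^ (n + 1) - C α : F[X]).Monic := monic_X_pow_sub_C α n.succ_ne_zero
  have hMdeg : (X ^ (n + 1) - C α : F[X]).natDegree = n + 1 := natDegree_X_pow_sub_C
  have hM1 : (X ^ (n + 1) - C α : F[X]) ≠ 1 := by intro h; rw [h] at hMdeg; simp at hMdeg
  have hq0 : q.coeff 0 ≠ 0 := by
    have := congrArg (fun f => coeff f 0) hpq
    simp only [mul_coeff_zero, coeff_sub, coeff_X_pow, coeff_C_zero] at this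
    intro h
    simp [h, hα] at this
  have hp0 : p ≠ 0 := by rintro rfl; rw [zero_mul] at hpq; exact hM.ne_zero hpq.symm
  have hc := natDegree_vecPoly_le c
  rw [← dvd_reflect_iff hc hq0]
  have hpM : p ∣ X ^ (n + 1) - C α := ⟨q, hpq.symm⟩
  have hbound : ∀ {g : F[X]}, g.natDegree ≤ n → (reflect n (vecPoly c) * g).natDegree ≤ n + n :=
    fun hg => natDegree_mul_le_of_le (natDegree_reflect_le_of_le hc) hg
  have hkey : (∀ d : Fin (n + 1) → F, p ∣ vecPoly d → ∑ i, c i * d i = 0) ↔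
      (X ^ (n + 1) - C α) ∣ reflect n (vecPoly c) * p := by
    constructor
    · intro h
      refine dvd_of_forall_coeff_modByMonic hM hMdeg fun m => ?_
      -- replace `p * m` by its residue, which is again a multiple of `p`
      have hg : ((p * m) %ₘ (X ^ (n + 1) - C α)).natDegree ≤ n := by
        have := natDegree_modByMonic_lt (p * m) hM hM1
        omega
      have hpg : p ∣ (p * m) %ₘ (X ^ (n + 1) - C α) :=
        (dvd_iff_dvd_of_dvd_sub (hpM.trans (dvd_modByMonic_sub _ _))).2 (dvd_mul_right _ _)
      have h1 := h (fun i => ((p * m) %ₘ (X ^ (n + 1) - C α)).coeff i)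
        (by rw [vecPoly_coeff hg]; exact hpg)
      rw [← coeff_reflect_mul_vecPoly, vecPoly_coeff hg,
        ← coeff_modByMonic_X_pow_sub_C α (hbound hg)] at h1
      rw [← h1, mul_assoc]
      congr 1
      rw [← sub_eq_zero, ← sub_modByMonic, modByMonic_eq_zero_iff_dvd hM, ← mul_sub]
      exact (dvd_sub_comm.1 (dvd_modByMonic_sub _ _)).mul_left _
    · rintro h d ⟨m, hm⟩
      rw [← coeff_reflect_mul_vecPoly, ← coeff_modByMonic_X_pow_sub_C α
        (hbound (natDegree_vecPoly_le d)), hm, ← mul_assoc,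
        (modByMonic_eq_zero_iff_dvd hM).2 (h.mul_right m), coeff_zero]
  rw [hkey, ← hpq, mul_comm _ p, mul_dvd_mul_iff_left hp0]

end Univariate

/-! ### Reciprocal polynomials of divisors of `x ^ s - α` -/

section Reciprocal

variable {F : Type*} [Field F]

lemma coeff_zero_ne_zero_of_dvd {s : ℕ} [NeZero s] {α : F} (hα : α ≠ 0) {q : F[X]}
    (hq : q ∣ X ^ s - C α) : q.coeff 0 ≠ 0 := by
  obtain ⟨p, hp⟩ := hq
  have := congrArg (fun f => coeff f 0) hp
  simp only [mul_coeff_zero, coeff_sub, coeff_X_pow, coeff_C_zero, if_neg (NeZero.ne s).symm,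
    zero_sub] at this
  intro h
  rw [h, zero_mul, neg_eq_zero] at this
  exact hα this

/-- As `α ^ 2 = 1`, the polynomial `X ^ s - α` is its own reciprocal up to a unit. -/
lemma reverse_dvd_X_pow_sub_C {s : ℕ} {α : F} (hα : α * α = 1) {q : F[X]}
    (hq : q ∣ X ^ s - C α) : q.reverse ∣ X ^ s - C α := by
  obtain ⟨p, hp⟩ := hq
  have h : (X ^ s - C α : F[X]).reverse = -C α * (X ^ s - C α) := by
    rw [reverse, natDegree_X_pow_sub_C, reflect_sub, reflect_monomial, reflect_C,
      revAt_le le_rfl, Nat.sub_self, pow_zero, mul_sub, neg_mul, neg_mul, ← C_mul, hα, C_1]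
    ring
  rw [hp, reverse_mul_of_domain, ← hp] at h
  have h' : (X ^ s - C α : F[X]) = q.reverse * (-C α * p.reverse) := by
    rw [mul_left_comm, h, ← mul_assoc, neg_mul_neg, ← C_mul, hα, C_1, one_mul]
  exact ⟨_, h'⟩

lemma exists_sub_mul_mem_span_iff {M p r : F[X]} (hp : p ∣ M) :
    (∃ m : F[X], r - m * p ∈ Ideal.span {M}) ↔ p ∣ r := by
  constructor
  · rintro ⟨m, hm⟩
    exact (dvd_iff_dvd_of_dvd_sub (hp.trans (Ideal.mem_span_singleton.1 hm))).2
      (dvd_mul_left _ _)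
  · rintro ⟨m, rfl⟩
    exact ⟨m, by rw [mul_comm, sub_self]; exact zero_mem _⟩

end Reciprocal

/-! ### The transform in the second and third variables -/

section Spectrum

variable {F : Type*} [Field F] {s l k : ℕ}

/-- The finite Fourier transform of a codeword in the `y` and `z` directions: its entry at
`(i, j, t)` is the coefficient of `x ^ i` after the substitution `y = θ ^ (1 + 2 j)`,
`z = ω ^ (1 + 2 t)`. -/
noncomputable def spec (θ ω : F) (v : Fin s × Fin l × Fin k → F) : Fin s × Fin l × Fin k → F :=
  fun w => ∑ y : Fin l, (∑ z : Fin k, v (w.1, y, z) * (ω ^ (1 + (w.2.2 : ℕ) * 2)) ^ (z : ℕ)) *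
    (θ ^ (1 + (w.2.1 : ℕ) * 2)) ^ (y : ℕ)

lemma sum_transform_mul [NeZero l] {θ : F} (hθ : orderOf θ = 2 * l) (f g : Fin l → F) :
    ∑ j : Fin l, (∑ y : Fin l, f y * (θ ^ (1 + (j : ℕ) * 2)) ^ (y : ℕ)) *
      (∑ y : Fin l, g y * (θ ^ (1 + (j.rev : ℕ) * 2)) ^ (y : ℕ)) = l * ∑ y : Fin l, f y * g y := by
  simp only [Finset.sum_mul_sum]
  rw [Finset.sum_comm, Finset.mul_sum]
  refine Finset.sum_congr rfl fun y _ => ?_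
  rw [Finset.sum_comm]
  simp only [mul_mul_mul_comm, ← Finset.mul_sum, node_orthogonal hθ]
  simp [mul_comm]

/-- Parseval's identity for `spec`. -/
lemma sum_spec_mul_spec_rev [NeZero l] [NeZero k] {θ ω : F} (hθ : orderOf θ = 2 * l)
    (hω : orderOf ω = 2 * k) (v b : Fin s × Fin l × Fin k → F) :
    ∑ w, spec θ ω v w * spec θ ω b (w.1, w.2.1.rev, w.2.2.rev) = l * k * dotV v b := by
  simp only [dotV, Fintype.sum_prod_type, spec]
  rw [Finset.mul_sum]
  refine Finset.sum_congr rfl fun i _ => ?_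
  rw [Finset.sum_comm]
  simp only [sum_transform_mul hθ (fun y => ∑ z : Fin k, v (i, y, z) * _)
    (fun y => ∑ z : Fin k, b (i, y, z) * _)]
  rw [← Finset.mul_sum, Finset.sum_comm, mul_assoc]
  congr 1
  rw [Finset.mul_sum]
  exact Finset.sum_congr rfl fun y _ => sum_transform_mul hω _ _

lemma spec_surjective [NeZero l] [NeZero k] {θ ω : F} (hθ : orderOf θ = 2 * l)
    (hω : orderOf ω = 2 * k) :
    Function.Surjective (spec θ ω : (Fin s × Fin l × Fin k → F) → _) := by
  let L : (Fin s × Fin l × Fin k → F) →ₗ[F] (Fin s × Fin l × Fin k → F) :=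
    { toFun := spec θ ω
      map_add' := fun v b => by
        funext w
        simp [spec, add_mul, Finset.sum_add_distrib]
      map_smul' := fun c v => by
        funext w
        simp [spec, Finset.mul_sum, Finset.sum_mul, mul_assoc] }
  have hL : Function.Injective L := by
    rw [← LinearMap.ker_eq_bot, LinearMap.ker_eq_bot']
    intro v hv
    funext w
    have h := sum_spec_mul_spec_rev hθ hω v (Pi.single w 1)
    rw [show spec θ ω v = 0 from hv] at h
    simpa [dotV, Pi.single_apply, natCast_ne_zero_of_orderOf hθ,
      natCast_ne_zero_of_orderOf hω] using h.symm
  exact LinearMap.injective_iff_surjective.1 hL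

end Spectrum

/-! ### Membership in the ideal, component by component -/

section Membership

variable {F : Type*} [Field F] {s l k : ℕ}

/-- The trivariate polynomial with a given coefficient array. -/
noncomputable def codePoly (v : Fin s × Fin l × Fin k → F) : MvPolynomial (Fin 3) F :=
  ∑ w : Fin s × Fin l × Fin k, v w • (MvPolynomial.X 0 ^ (w.1 : ℕ) *
    MvPolynomial.X 1 ^ (w.2.1 : ℕ) * MvPolynomial.X 2 ^ (w.2.2 : ℕ))

lemma phiV_eq_mk (α β γ : F) (v : Fin s × Fin l × Fin k → F) :
    phiV α β γ v = Ideal.Quotient.mk (ccIdeal F s l k α β γ) (codePoly v) := by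
  rw [codePoly, map_sum]
  rfl

/-- A codeword lies in the ideal iff each of its components under the decomposition of the ring
into copies of `F[x] / (x ^ s - α)`, indexed by the roots of `y ^ l + 1` and `z ^ k + 1`,
is divisible by the corresponding generator. -/
lemma phiV_mem_iff [NeZero s] [NeZero l] [NeZero k] {α : F}
    {θ ω : F} (hθ : orderOf θ = 2 * l) (hθl : θ ^ l = -1)
    (hω : orderOf ω = 2 * k) (hωk : ω ^ k = -1)
    {p : Fin k → Fin l → F[X]} (hp : ∀ t j, p t j ∣ X ^ s - C α)
    (v : Fin s × Fin l × Fin k → F) :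
    phiV α (-1) (-1) v ∈ Ideal.span (Set.range fun tj : Fin k × Fin l =>
      Ideal.Quotient.mk (ccIdeal F s l k α (-1) (-1))
        (inZ (zetaPoly ω 2 k tj.1) * inY (zetaPoly θ 2 l tj.2) * inX (p tj.1 tj.2))) ↔
    ∀ t j, p t j ∣ vecPoly fun i => spec θ ω v (i, j, t) := by
  rw [phiV_eq_mk]
  generalize hI : ccIdeal F s l k α (-1) (-1) = I
  constructor
  · intro hv t j
    -- evaluation at `y = θ ^ (1 + 2 j)`, `z = ω ^ (1 + 2 t)`, with values modulo `p t j`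
    let ev : MvPolynomial (Fin 3) F →ₐ[F] AdjoinRoot (p t j) := MvPolynomial.aeval
      ![AdjoinRoot.root (p t j), algebraMap F _ (θ ^ (1 + (j : ℕ) * 2)),
        algebraMap F _ (ω ^ (1 + (t : ℕ) * 2))]
    have ev0 : ev (MvPolynomial.X 0) = AdjoinRoot.root (p t j) := by simp [ev]
    have ev1 : ev (MvPolynomial.X 1) = algebraMap F _ (θ ^ (1 + (j : ℕ) * 2)) := by simp [ev]
    have ev2 : ev (MvPolynomial.X 2) = algebraMap F _ (ω ^ (1 + (t : ℕ) * 2)) := by simp [ev]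
    have hroot : ∀ f : F[X], aeval (AdjoinRoot.root (p t j)) f = AdjoinRoot.mk (p t j) f :=
      fun f => AdjoinRoot.aeval_eq f
    have hodd : ∀ {n : ℕ} {η : F} (i : ℕ), η ^ n = -1 → (η ^ (1 + i * 2)) ^ n = -1 := by
      intro n η i h
      rw [← pow_mul, mul_comm, pow_mul, h, pow_add, pow_mul']
      simp
    have hker : ∀ a ∈ I, ev a = 0 := by
      have : I ≤ RingHom.ker ev := by
        rw [← hI, ccIdeal, Ideal.span_le]
        rintro a (rfl | rfl | rfl)
        · have h := (AdjoinRoot.mk_eq_zero (f := p t j)).2 (hp t j)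
          simpa [ev0, RingHom.mem_ker, AdjoinRoot.algebraMap_eq] using h
        · simp only [SetLike.mem_coe, RingHom.mem_ker, map_sub, map_pow, ev1]
          rw [← map_pow, ← map_pow, hodd _ hθl, ← MvPolynomial.algebraMap_eq, AlgHom.commutes, sub_self]
        · simp only [SetLike.mem_coe, RingHom.mem_ker, map_sub, map_pow, ev2]
          rw [← map_pow, ← map_pow, hodd _ hωk, ← MvPolynomial.algebraMap_eq, AlgHom.commutes, sub_self]
      exact this
    let e : (MvPolynomial (Fin 3) F ⧸ I) →ₐ[F] AdjoinRoot (p t j) := Ideal.Quotient.liftₐ I ev hker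
    have he : ∀ a, e (Ideal.Quotient.mk I a) = ev a := fun a => rfl
    have hgen : ∀ a ∈ Ideal.span (Set.range fun tj : Fin k × Fin l => Ideal.Quotient.mk I
        (inZ (zetaPoly ω 2 k tj.1) * inY (zetaPoly θ 2 l tj.2) * inX (p tj.1 tj.2))), e a = 0 := by
      have : Ideal.span (Set.range fun tj : Fin k × Fin l => Ideal.Quotient.mk I
        (inZ (zetaPoly ω 2 k tj.1) * inY (zetaPoly θ 2 l tj.2) * inX (p tj.1 tj.2))) ≤
          RingHom.ker e := by
        rw [Ideal.span_le]
        rintro _ ⟨⟨t', j'⟩, rfl⟩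
        simp only [SetLike.mem_coe, RingHom.mem_ker, he, map_mul, inX, inY, inZ,
          ← aeval_algHom_apply, ev0, ev1, ev2, aeval_algebraMap_apply, hroot]
        by_cases ht : t' = t
        · by_cases hj : j' = j
          · subst ht hj
            rw [AdjoinRoot.mk_self, mul_zero]
          · have h0 : aeval (θ ^ (1 + (j : ℕ) * 2)) (zetaPoly θ 2 l j') = 0 := by
              rw [zetaPoly_eq_basis, coe_aeval_eq_eval]
              exact Lagrange.eval_basis_of_ne (v := fun i : ℕ => θ ^ (1 + i * 2))
                (fun h => hj (Fin.ext h)) (by simp)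
            rw [h0, map_zero, mul_zero, zero_mul]
        · have h0 : aeval (ω ^ (1 + (t : ℕ) * 2)) (zetaPoly ω 2 k t') = 0 := by
            rw [zetaPoly_eq_basis, coe_aeval_eq_eval]
            exact Lagrange.eval_basis_of_ne (v := fun i : ℕ => ω ^ (1 + i * 2))
              (fun h => ht (Fin.ext h)) (by simp)
          rw [h0, map_zero, zero_mul, zero_mul]
      exact this
    have h := hgen _ hv
    rw [← AdjoinRoot.mk_eq_zero, ← h, he, codePoly, map_sum, vecPoly, map_sum, Fintype.sum_prod_type]
    refine Finset.sum_congr rfl fun i _ => ?_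
    simp only [AlgHom.commutes, map_mul, map_pow, ev0, ev1, ev2, spec, Fintype.sum_prod_type,
      AdjoinRoot.mk_C, AdjoinRoot.mk_X, ← AdjoinRoot.algebraMap_eq, map_sum, Finset.sum_mul,
      Algebra.smul_def]
    refine Finset.sum_congr rfl fun y _ => Finset.sum_congr rfl fun z _ => ?_
    ring
  · intro h
    set x : MvPolynomial (Fin 3) F ⧸ I := Ideal.Quotient.mk I (MvPolynomial.X 0) with hx
    set y : MvPolynomial (Fin 3) F ⧸ I := Ideal.Quotient.mk I (MvPolynomial.X 1) with hy
    set z : MvPolynomial (Fin 3) F ⧸ I := Ideal.Quotient.mk I (MvPolynomial.X 2) with hz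
    have hmkX : ∀ f : F[X], Ideal.Quotient.mk I (inX f) = aeval x f := fun f =>
      (aeval_algHom_apply (Ideal.Quotient.mkₐ F I) _ f).symm
    have hmkY : ∀ f : F[X], Ideal.Quotient.mk I (inY f) = aeval y f := fun f =>
      (aeval_algHom_apply (Ideal.Quotient.mkₐ F I) _ f).symm
    have hmkZ : ∀ f : F[X], Ideal.Quotient.mk I (inZ f) = aeval z f := fun f =>
      (aeval_algHom_apply (Ideal.Quotient.mkₐ F I) _ f).symm
    have hyl : y ^ l = -1 := by
      have : Ideal.Quotient.mk I (MvPolynomial.X 1 ^ l - MvPolynomial.C (-1)) = 0 :=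
        Ideal.Quotient.eq_zero_iff_mem.2 (hI ▸ Ideal.subset_span (by simp))
      rw [map_sub, map_pow, ← hy, sub_eq_zero] at this
      rw [this]
      simp
    have hzk : z ^ k = -1 := by
      have : Ideal.Quotient.mk I (MvPolynomial.X 2 ^ k - MvPolynomial.C (-1)) = 0 :=
        Ideal.Quotient.eq_zero_iff_mem.2 (hI ▸ Ideal.subset_span (by simp))
      rw [map_sub, map_pow, ← hz, sub_eq_zero] at this
      rw [this]
      simp
    -- the products `ζ_t(z) η_j(y)` sum to `1`
    have hone : ∑ t : Fin k, ∑ j : Fin l, aeval z (zetaPoly ω 2 k t) * aeval y (zetaPoly θ 2 l j) =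
        1 := by
      rw [← Finset.sum_mul_sum, ← map_sum, ← map_sum, sum_zetaPoly hθ, sum_zetaPoly hω]
      simp
    generalize hS : Ideal.Quotient.mk I (codePoly v) = S
    rw [← one_mul S, ← hone, Finset.sum_mul]
    refine Ideal.sum_mem _ fun t _ => ?_
    rw [Finset.sum_mul]
    refine Ideal.sum_mem _ fun j _ => ?_
    have hcomp : aeval z (zetaPoly ω 2 k t) * aeval y (zetaPoly θ 2 l j) * S =
        aeval z (zetaPoly ω 2 k t) * aeval y (zetaPoly θ 2 l j) *
          aeval x (vecPoly fun i => spec θ ω v (i, j, t)) := by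
      have hterm : ∀ (c : F) (a b d : ℕ),
          aeval z (zetaPoly ω 2 k t) * aeval y (zetaPoly θ 2 l j) *
            (algebraMap F _ c * (x ^ a * y ^ b * z ^ d)) =
          aeval z (zetaPoly ω 2 k t) * aeval y (zetaPoly θ 2 l j) *
            (algebraMap F _ (c * (ω ^ (1 + (t : ℕ) * 2)) ^ d * (θ ^ (1 + (j : ℕ) * 2)) ^ b) *
              x ^ a) := by
        intro c a b d
        have h1 := mul_aeval_zetaPoly_pow hω hωk z hzk t d
        have h2 := mul_aeval_zetaPoly_pow hθ hθl y hyl j b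
        rw [map_mul, map_mul]
        linear_combination
          (algebraMap F (MvPolynomial (Fin 3) F ⧸ I) c * x ^ a * aeval y (zetaPoly θ 2 l j) *
            y ^ b) * h1 +
          (algebraMap F (MvPolynomial (Fin 3) F ⧸ I) c * x ^ a * aeval z (zetaPoly ω 2 k t) *
            algebraMap F (MvPolynomial (Fin 3) F ⧸ I) ((ω ^ (1 + (t : ℕ) * 2)) ^ d)) * h2
      rw [← hS, codePoly, map_sum]
      have hsmul : ∀ (c : F) (a : MvPolynomial (Fin 3) F), Ideal.Quotient.mk I (c • a) =
          algebraMap F _ c * Ideal.Quotient.mk I a := fun c a => by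
        rw [Algebra.smul_def, map_mul]
        rfl
      simp only [hsmul, map_mul (Ideal.Quotient.mk I), map_pow (Ideal.Quotient.mk I), ← hx,
        ← hy, ← hz, Finset.mul_sum, hterm, vecPoly, spec, map_sum,
        Fintype.sum_prod_type, map_mul (aeval x), aeval_C, aeval_X, map_pow (aeval x),
        Finset.sum_mul]
    rw [hcomp]
    obtain ⟨m, hm⟩ := h t j
    rw [hm, map_mul, ← mul_assoc]
    refine Ideal.mul_mem_right _ _ (Ideal.subset_span ⟨(t, j), ?_⟩)
    simp only [map_mul, hmkX, hmkY, hmkZ]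

end Membership

/-! ### Duality, component by component -/

section Duality

variable {F : Type*} [Field F] {s l k : ℕ}

/-- The coefficient array supported on the `x`-line through `(j, t)`, with coefficients `d`. -/
def lineV (j : Fin l) (t : Fin k) (d : Fin s → F) : Fin s × Fin l × Fin k → F :=
  fun w => if w.2 = (j, t) then d w.1 else 0

lemma dvd_vecPoly_lineV {f : F[X]} {j : Fin l} {t : Fin k} {d : Fin s → F} {j' : Fin l}
    {t' : Fin k} (h : (j', t') = (j, t) → f ∣ vecPoly d) :
    f ∣ vecPoly fun i => lineV j t d (i, j', t') := by
  by_cases hjt : (j', t') = (j, t)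
  · simpa [lineV, hjt] using h hjt
  · simp [lineV, hjt, vecPoly]

/-- Orthogonality to a code that is a direct sum of univariate codes is tested line by line. -/
lemma forall_sum_rev_eq_zero_iff (p : Fin k → Fin l → F[X]) (u : Fin s × Fin l × Fin k → F) :
    (∀ w : Fin s × Fin l × Fin k → F, (∀ t j, p t j ∣ vecPoly fun i => w (i, j, t)) →
      ∑ x, u x * w (x.1, x.2.1.rev, x.2.2.rev) = 0) ↔
    ∀ t j, ∀ d : Fin s → F, p t.rev j.rev ∣ vecPoly d → ∑ i, u (i, j, t) * d i = 0 := by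
  constructor
  · intro h t j d hd
    have h1 := h (lineV j.rev t.rev d) fun t' j' => dvd_vecPoly_lineV fun hjt => by
      obtain ⟨rfl, rfl⟩ := Prod.mk.inj hjt
      exact hd
    rw [← h1, Fintype.sum_prod_type]
    refine Finset.sum_congr rfl fun i _ => ?_
    rw [Finset.sum_eq_single (j, t)]
    · simp [lineV]
    · rintro ⟨j', t'⟩ - hne
      have : ¬ (j' = j ∧ t' = t) := fun h => hne (by rw [h.1, h.2])
      simp [lineV, this]
    · simp
  · intro h w hw
    rw [Fintype.sum_prod_type, Finset.sum_comm]
    refine Finset.sum_eq_zero fun jt _ => ?_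
    exact h jt.2 jt.1 _ (hw _ _)

/-- Two direct sums of univariate codes, with generators dividing the modulus, agree iff their
generators divide each other. -/
lemma forall_dvd_iff_dvd_iff [NeZero s] {α : F} {p r : Fin k → Fin l → F[X]}
    (hp : ∀ t j, p t j ∣ X ^ s - C α) (hr : ∀ t j, r t j ∣ X ^ s - C α) :
    (∀ u : Fin s × Fin l × Fin k → F,
      (∀ t j, p t j ∣ vecPoly fun i => u (i, j, t)) ↔ ∀ t j, r t j ∣ vecPoly fun i => u (i, j, t)) ↔
    ∀ t j, r t j ∣ p t j ∧ p t j ∣ r t j := by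
  -- reduce a polynomial modulo `X ^ s - α` to make it a codeword
  have hres : ∀ f : F[X], ∃ d : Fin s → F, ∀ g : F[X], g ∣ X ^ s - C α → (g ∣ vecPoly d ↔ g ∣ f) := by
    intro f
    obtain ⟨n, rfl⟩ : ∃ n, s = n + 1 := Nat.exists_eq_succ_of_ne_zero (NeZero.ne s)
    have hM : (X ^ (n + 1) - C α : F[X]).Monic := monic_X_pow_sub_C α n.succ_ne_zero
    have hMdeg : (X ^ (n + 1) - C α : F[X]).natDegree = n + 1 := natDegree_X_pow_sub_C
    have hM1 : (X ^ (n + 1) - C α : F[X]) ≠ 1 := by intro h; rw [h] at hMdeg; simp at hMdeg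
    have hlt := natDegree_modByMonic_lt f hM hM1
    refine ⟨fun i => (f %ₘ (X ^ (n + 1) - C α)).coeff i, fun g hg => ?_⟩
    rw [vecPoly_coeff (by omega)]
    exact dvd_iff_dvd_of_dvd_sub (hg.trans (dvd_modByMonic_sub _ _))
  constructor
  · intro h t j
    constructor
    · obtain ⟨d, hd⟩ := hres (p t j)
      have h1 := (h (lineV j t d)).1 (fun t' j' => dvd_vecPoly_lineV fun hjt => by
        obtain ⟨rfl, rfl⟩ := Prod.mk.inj hjt
        exact (hd _ (hp _ _)).2 dvd_rfl) t j
      exact (hd _ (hr _ _)).1 (by simpa [lineV] using h1)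
    · obtain ⟨d, hd⟩ := hres (r t j)
      have h1 := (h (lineV j t d)).2 (fun t' j' => dvd_vecPoly_lineV fun hjt => by
        obtain ⟨rfl, rfl⟩ := Prod.mk.inj hjt
        exact (hd _ (hr _ _)).2 dvd_rfl) t j
      exact (hd _ (hp _ _)).1 (by simpa [lineV] using h1)
  · intro h u
    exact ⟨fun hu t j => (h t j).1.trans (hu t j), fun hu t j => (h t j).2.trans (hu t j)⟩

lemma natDegree_reverse_of_coeff_zero {q : F[X]} (hq : q.coeff 0 ≠ 0) :
    q.reverse.natDegree = q.natDegree := by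
  rw [reverse_natDegree, natTrailingDegree_eq_zero.2 (Or.inr hq), Nat.sub_zero]

end Duality

/-- **Theorem 4, case β = γ = −1**: the 3-D `(α,−1,−1)`-constacyclic code
`C = ⟨ζ_t(z)·η_j(y)·p_j^{(t)}(x)⟩` of length `sℓk` is self-dual iff
`sℓk = 2·Σ a_{t,j}` and for all `t, j` one has
`q_j^{(t)*} ≡ m·p_{ℓ−1−j}^{(k−1−t)}` and `p_j^{(t)} ≡ m'·q_{ℓ−1−j}^{(k−1−t)*}`
modulo `x^s − α` (the index `k−1−t` is `Fin.rev t`, and similarly for `j`). -/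
theorem stmt17 {F : Type*} [Field F] [Fintype F] (h2 : (2 : F) ≠ 0) (s l k : ℕ)
    [NeZero s] [NeZero l] [NeZero k]
    (α : F) (hα : α = 1 ∨ α = -1)
    (ω : F) (hω : orderOf ω = 2 * k) (hωk : ω ^ k = (-1 : F))
    (θ : F) (hθ : orderOf θ = 2 * l) (hθl : θ ^ l = (-1 : F))
    (p q : Fin k → Fin l → Polynomial F) (a : Fin k → Fin l → ℕ)
    (hmonic : ∀ t j, (p t j).Monic)
    (hpq : ∀ t j, p t j * q t j = Polynomial.X ^ s - Polynomial.C α)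
    (hdeg : ∀ t j, (p t j).natDegree = a t j)
    (C : Ideal (MvPolynomial (Fin 3) F ⧸ ccIdeal F s l k α (-1) (-1)))
    (hC : C = Ideal.span (Set.range fun tj : Fin k × Fin l =>
      Ideal.Quotient.mk (ccIdeal F s l k α (-1) (-1))
        (inZ (zetaPoly ω 2 k tj.1) * inY (zetaPoly θ 2 l tj.2) * inX (p tj.1 tj.2)))) :
    {v : Fin s × Fin l × Fin k → F | phiV α (-1) (-1) v ∈ C} =
      {v : Fin s × Fin l × Fin k → F |
        ∀ b : Fin s × Fin l × Fin k → F, phiV α (-1) (-1) b ∈ C → dotV v b = 0} ↔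
      (s * l * k = 2 * ∑ t : Fin k, ∑ j : Fin l, a t j) ∧
      (∀ t : Fin k, ∀ j : Fin l,
        (∃ m : Polynomial F,
          (q t j).reverse - m * p t.rev j.rev
            ∈ Ideal.span {Polynomial.X ^ s - Polynomial.C α}) ∧
        (∃ m' : Polynomial F,
          p t j - m' * (q t.rev j.rev).reverse
            ∈ Ideal.span {Polynomial.X ^ s - Polynomial.C α})) := by
  have hαα : α * α = 1 := by rcases hα with rfl | rfl <;> ring
  have hα0 : α ≠ 0 := left_ne_zero_of_mul (hαα ▸ one_ne_zero)
  have hp : ∀ t j, p t j ∣ X ^ s - Polynomial.C α := fun t j => ⟨_, (hpq t j).symm⟩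
  have hq : ∀ t j, q t j ∣ X ^ s - Polynomial.C α := fun t j =>
    ⟨p t j, by rw [mul_comm, hpq]⟩
  have hr : ∀ t j, (q (Fin.rev t) (Fin.rev j)).reverse ∣ X ^ s - Polynomial.C α := fun t j =>
    reverse_dvd_X_pow_sub_C hαα (hq _ _)
  have hlk : (l : F) * k ≠ 0 :=
    mul_ne_zero (natCast_ne_zero_of_orderOf hθ) (natCast_ne_zero_of_orderOf hω)
  have hsurj := spec_surjective (s := s) hθ hω
  have hdual : ∀ v : Fin s × Fin l × Fin k → F,
      (∀ b : Fin s × Fin l × Fin k → F, phiV α (-1) (-1) b ∈ C → dotV v b = 0) ↔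
      ∀ t j, (q (Fin.rev t) (Fin.rev j)).reverse ∣ vecPoly fun i => spec θ ω v (i, j, t) := by
    intro v
    simp only [← fun t j => forall_sum_eq_zero_iff hα0 (hpq (Fin.rev t) (Fin.rev j))
      (fun i => spec θ ω v (i, j, t))]
    rw [← forall_sum_rev_eq_zero_iff]
    refine Iff.trans ?_ hsurj.forall.symm
    refine forall_congr' fun b => ?_
    rw [hC, phiV_mem_iff hθ hθl hω hωk hp, sum_spec_mul_spec_rev hθ hω, mul_eq_zero,
      or_iff_right hlk]
  have hmain : {v : Fin s × Fin l × Fin k → F | phiV α (-1) (-1) v ∈ C} =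
      {v : Fin s × Fin l × Fin k → F |
        ∀ b : Fin s × Fin l × Fin k → F, phiV α (-1) (-1) b ∈ C → dotV v b = 0} ↔
      ∀ t j, (q (Fin.rev t) (Fin.rev j)).reverse ∣ p t j ∧
        p t j ∣ (q (Fin.rev t) (Fin.rev j)).reverse := by
    rw [← forall_dvd_iff_dvd_iff hp hr, Set.ext_iff]
    refine Iff.trans ?_ hsurj.forall.symm
    refine forall_congr' fun v => ?_
    rw [Set.mem_ofPred_eq, Set.mem_ofPred_eq, hdual, hC, phiV_mem_iff hθ hθl hω hωk hp]
  simp only [hmain, fun t j => exists_sub_mul_mem_span_iff (r := (q t j).reverse)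
    (hp (Fin.rev t) (Fin.rev j)), fun t j => exists_sub_mul_mem_span_iff (r := p t j) (hr t j)]
  have hii : (∀ t j, (q (Fin.rev t) (Fin.rev j)).reverse ∣ p t j ∧
        p t j ∣ (q (Fin.rev t) (Fin.rev j)).reverse) ↔
      ∀ t j, p (Fin.rev t) (Fin.rev j) ∣ (q t j).reverse ∧
        (q (Fin.rev t) (Fin.rev j)).reverse ∣ p t j := by
    constructor
    · intro h t j
      have h1 := (h (Fin.rev t) (Fin.rev j)).2
      rw [Fin.rev_rev, Fin.rev_rev] at h1
      exact ⟨h1, (h t j).1⟩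
    · intro h t j
      have h1 := (h (Fin.rev t) (Fin.rev j)).1
      rw [Fin.rev_rev, Fin.rev_rev] at h1
      exact ⟨(h t j).2, h1⟩
  rw [hii, iff_and_self, ← hii]
  -- the degree identity follows from the divisibilities: `a_{t,j} + a_{rev t, rev j} = s`
  intro h
  have hsum : ∀ t j, a t j + a (Fin.rev t) (Fin.rev j) = s := by
    intro t j
    have h1 := natDegree_eq_of_degree_eq (degree_eq_degree_of_associated
      (associated_of_dvd_dvd (h t j).1 (h t j).2))
    rw [natDegree_reverse_of_coeff_zero (coeff_zero_ne_zero_of_dvd hα0 (hq _ _)), hdeg] at h1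
    have h2 := congrArg natDegree (hpq (Fin.rev t) (Fin.rev j))
    have h0 : p (Fin.rev t) (Fin.rev j) * q (Fin.rev t) (Fin.rev j) ≠ 0 := by
      rw [hpq]
      exact (monic_X_pow_sub_C α (NeZero.ne s)).ne_zero
    rw [natDegree_mul (left_ne_zero_of_mul h0) (right_ne_zero_of_mul h0), natDegree_X_pow_sub_C,
      hdeg, h1] at h2
    omega
  have hrev : ∑ t : Fin k, ∑ j : Fin l, a (Fin.rev t) (Fin.rev j) =
      ∑ t : Fin k, ∑ j : Fin l, a t j := by
    rw [← Equiv.sum_comp Fin.revPerm (fun t => ∑ j : Fin l, a t j)]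
    exact Finset.sum_congr rfl fun t _ => Equiv.sum_comp Fin.revPerm (fun j => a _ j)
  have htot : ∑ t : Fin k, ∑ j : Fin l, (a t j + a (Fin.rev t) (Fin.rev j)) = k * (l * s) := by
    simp [hsum]
  simp only [Finset.sum_add_distrib] at htot
  rw [hrev] at htot
  rw [two_mul, htot]
  ring
end

section
/- Let F be a finite field of characteristic p, let s,ℓ,k ≥ 1, and let α ∈ {1,−1} ⊆ F. Assume p does not divide s, p does not divide ℓ, p does not divide k, F contains a primitive ℓ-th root of unity and a primitive k-th root of unity, and, in case α = −1, that s is odd. Let R := F[x,y,z]/⟨x^s−α, y^ℓ−1, z^k−1⟩ with quotient map π, let V := (Fin s × Fin ℓ × Fin k) → F with dot product ⟨c,d⟩ := Σ c(i,j,t)d(i,j,t), and let φ : V → R be the F-linear isomorphism φ(c) := Σ c(i,j,t)·π(x^i y^j z^t). Then no ideal C of R is self-dual; that is, for every ideal C of R, φ^{−1}(C) is not equal to its own orthogonal complement {v ∈ V : ⟨v,c⟩ = 0 for all c ∈ φ^{−1}(C)}. -/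
/-!
The point `(α, 1, 1)` lies on the variety of `⟨x^s − α, y^ℓ − 1, z^k − 1⟩`, because `α^s = α`.
Let `u(i,j,t) = α^i` and `e = φ(u) = ∑ α^i x^i y^j z^t`. A geometric-sum argument gives
`x·e = α·e`, `y·e = e` and `z·e = e`, so every `φ(b)` acts on `e` as the scalar
`b(α,1,1) = ⟨u, b⟩` (`phiV_mul_phiV_pointVec`). Suppose `C` is self-dual.

* If `e ∈ C`, then `0 = ⟨u, u⟩ = sℓk` in `F`, which is impossible since the characteristic
  divides none of `s`, `ℓ`, `k`.
* If `e ∉ C`, then for every `φ(b) ∈ C` the product `φ(b)·e = ⟨u, b⟩ e` lies in `C`, which forces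
  `⟨u, b⟩ = 0`. So `u` is orthogonal to `φ⁻¹(C)`, and `e ∈ C` by self-duality: a contradiction.
-/

set_option synthInstance.maxHeartbeats 1000000

open Polynomial

/-- The coefficient vector `u(i,j,t) = α^i`; pairing with it evaluates at the point `(α, 1, 1)`. -/
def pointVec {F : Type*} [Field F] {s l k : ℕ} (α : F) : Fin s × Fin l × Fin k → F :=
  fun w => α ^ (w.1 : ℕ)

lemma pow_mul_geom_sum_of_pow_eq_one {R : Type*} [CommRing R] {n : ℕ} {u : R} (hu : u ^ n = 1)
    (i : ℕ) : u ^ i * ∑ j : Fin n, u ^ (j : ℕ) = ∑ j : Fin n, u ^ (j : ℕ) := by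
  have h1 : u * ∑ j : Fin n, u ^ (j : ℕ) = ∑ j : Fin n, u ^ (j : ℕ) := by
    rw [Fin.sum_univ_eq_sum_range (fun j => u ^ j) n]
    linear_combination mul_geom_sum u n + hu
  induction i with
  | zero => simp
  | succ i ih => rw [pow_succ, mul_assoc, h1, ih]

/-- `e = φ(u)` is a common eigenvector of multiplication by `x`, `y`, `z`, with eigenvalues
`α`, `1`, `1`; hence `φ(b)` multiplies it by `⟨u, b⟩`. -/
lemma phiV_mul_phiV_pointVec {F : Type*} [Field F] {s l k : ℕ} {α : F} (hα2 : α * α = 1)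
    (hαs : α ^ s = α) (b : Fin s × Fin l × Fin k → F) :
    phiV α 1 1 b * phiV α 1 1 (pointVec (s := s) (l := l) (k := k) α) =
      dotV (pointVec α) b • phiV α 1 1 (pointVec (s := s) (l := l) (k := k) α) := by
  set I := ccIdeal F s l k α 1 1 with hI
  set x := Ideal.Quotient.mk I (MvPolynomial.X 0) with hx
  set y := Ideal.Quotient.mk I (MvPolynomial.X 1) with hy
  set z := Ideal.Quotient.mk I (MvPolynomial.X 2) with hz
  set a := Ideal.Quotient.mk I (MvPolynomial.C α) with ha
  have hsmul : ∀ (c : F) (r : MvPolynomial (Fin 3) F ⧸ I),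
      c • r = Ideal.Quotient.mk I (MvPolynomial.C c) * r := fun c r => Algebra.smul_def c r
  have hxs : x ^ s = a := by
    rw [hx, ha, ← map_pow, Ideal.Quotient.eq]
    exact Ideal.subset_span (by simp)
  have hyl : y ^ l = 1 := by
    rw [hy, ← map_pow, ← map_one (Ideal.Quotient.mk I), Ideal.Quotient.eq]
    exact Ideal.subset_span (by simp)
  have hzk : z ^ k = 1 := by
    rw [hz, ← map_pow, ← map_one (Ideal.Quotient.mk I), Ideal.Quotient.eq]
    exact Ideal.subset_span (by simp)
  have haa : a * a = 1 := by
    rw [ha, ← map_mul, ← map_mul, hα2, map_one, map_one]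
  have has : a ^ s = a := by
    rw [ha, ← map_pow, ← map_pow, hαs]
  -- `e` factors as a product of three geometric sums, with ratios `αx`, `y` and `z`.
  have he : phiV α 1 1 (pointVec (s := s) (l := l) (k := k) α) =
      (∑ i : Fin s, (a * x) ^ (i : ℕ)) *
        ((∑ j : Fin l, y ^ (j : ℕ)) * ∑ t : Fin k, z ^ (t : ℕ)) := by
    rw [Finset.sum_mul_sum, ← Finset.sum_product', Finset.univ_product_univ,
      Finset.sum_mul_sum, ← Finset.sum_product', Finset.univ_product_univ]
    refine Finset.sum_congr rfl fun w _ => ?_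
    rw [hsmul, pointVec]
    simp only [map_pow, map_mul, ← ha]
    ring
  have hmon : ∀ i j t : ℕ, x ^ i * y ^ j * z ^ t *
      phiV α 1 1 (pointVec (s := s) (l := l) (k := k) α) =
        a ^ i * phiV α 1 1 (pointVec (s := s) (l := l) (k := k) α) := by
    intro i j t
    have h1 := pow_mul_geom_sum_of_pow_eq_one (n := s) (u := a * x)
      (by rw [mul_pow, hxs, has, haa]) i
    have h2 := pow_mul_geom_sum_of_pow_eq_one hyl j
    have h3 := pow_mul_geom_sum_of_pow_eq_one hzk t
    have hai : a ^ i * a ^ i = 1 := by rw [← mul_pow, haa, one_pow]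
    rw [he]
    calc _ = (a ^ i * a ^ i) * (x ^ i * y ^ j * z ^ t *
          ((∑ i : Fin s, (a * x) ^ (i : ℕ)) *
            ((∑ j : Fin l, y ^ (j : ℕ)) * ∑ t : Fin k, z ^ (t : ℕ)))) := by rw [hai, one_mul]
      _ = a ^ i * (((a * x) ^ i * ∑ i : Fin s, (a * x) ^ (i : ℕ)) *
            ((y ^ j * ∑ j : Fin l, y ^ (j : ℕ)) * (z ^ t * ∑ t : Fin k, z ^ (t : ℕ)))) := by
          rw [mul_pow a x i]; ring
      _ = _ := by rw [h1, h2, h3]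
  conv_lhs => rw [phiV]
  rw [dotV, Finset.sum_mul, Finset.sum_smul]
  refine Finset.sum_congr rfl fun w _ => ?_
  rw [smul_mul_assoc, map_mul, map_mul, map_pow, map_pow, map_pow, hmon, mul_comm (pointVec α w),
    mul_smul, pointVec, hsmul (α ^ _), map_pow, map_pow]

lemma dotV_pointVec_self {F : Type*} [Field F] {s l k : ℕ} {α : F} (hα2 : α * α = 1) :
    dotV (pointVec (s := s) (l := l) (k := k) α) (pointVec α) = (s : F) * (l * k) := by
  simp [dotV, pointVec, ← mul_pow, hα2]

/-- **Theorem 5**: over a finite field `F` of characteristic `p` with `p ∤ s`, `p ∤ ℓ`,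
`p ∤ k`, containing primitive `ℓ`-th and `k`-th roots of unity, with `α ∈ {1,−1}` and
`s` odd in case `α = −1`, no ideal of `R = F[x,y,z]/⟨x^s−α, y^ℓ−1, z^k−1⟩` (i.e. no 3-D
`(α,1,1)`-constacyclic code of length `sℓk`) is self-dual. -/
theorem stmt18 {F : Type*} [Field F] [Fintype F] (s l k : ℕ)
    [NeZero s] [NeZero l] [NeZero k]
    (hps : ¬ (ringChar F ∣ s)) (hpl : ¬ (ringChar F ∣ l)) (hpk : ¬ (ringChar F ∣ k))
    (hω : ∃ ω : F, IsPrimitiveRoot ω k) (hθ : ∃ θ : F, IsPrimitiveRoot θ l)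
    (α : F) (hα : α = 1 ∨ α = -1) (hodd : α = -1 → Odd s) :
    ∀ C : Ideal (MvPolynomial (Fin 3) F ⧸ ccIdeal F s l k α 1 1),
      {v : Fin s × Fin l × Fin k → F | phiV α 1 1 v ∈ C} ≠
        {v : Fin s × Fin l × Fin k → F |
          ∀ b : Fin s × Fin l × Fin k → F, phiV α 1 1 b ∈ C → dotV v b = 0} := by
  intro C hC
  have hα2 : α * α = 1 := by rcases hα with rfl | rfl <;> ring
  have hαs : α ^ s = α := by
    rcases hα with rfl | h
    · exact one_pow s
    · rw [h, (hodd h).neg_one_pow]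
  have hmem : ∀ v : Fin s × Fin l × Fin k → F, phiV α 1 1 v ∈ C ↔
      ∀ b : Fin s × Fin l × Fin k → F, phiV α 1 1 b ∈ C → dotV v b = 0 :=
    fun v => Set.ext_iff.1 hC v
  have heC : phiV α 1 1 (pointVec (s := s) (l := l) (k := k) α) ∉ C := by
    intro h
    have h0 := (hmem _).1 h _ h
    rw [dotV_pointVec_self hα2] at h0
    rcases mul_eq_zero.1 h0 with h | h
    · exact hps (ringChar.dvd h)
    · rcases mul_eq_zero.1 h with h | h
      · exact hpl (ringChar.dvd h)
      · exact hpk (ringChar.dvd h)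
  refine heC ((hmem _).2 fun b hb => ?_)
  by_contra hne
  have h : dotV (pointVec α) b • phiV α 1 1 (pointVec (s := s) (l := l) (k := k) α) ∈ C := by
    rw [← phiV_mul_phiV_pointVec hα2 hαs b]
    exact C.mul_mem_right _ hb
  have h' := Submodule.smul_of_tower_mem C (dotV (pointVec α) b)⁻¹ h
  rw [smul_smul, inv_mul_cancel₀ hne, one_smul] at h'
  exact heC h'
end
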